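/- Let F be a finite extension of ℚ₃ containing a primitive cube root of unity, set d = [F:ℚ₃], and let E be a quadratic field extension of F. Then the kernel of the map O_E^×/(O_E^×)³ → O_F^×/(O_F^×)³ induced by the norm N_{E/F} has order exactly 3^d. (In the paper's application d = 6, giving order 3⁶.) -/

import Mathlib

/-!
If `n` is a nonzerodivisor of a commutative ring `R` that is `n`-adically complete, then
`(1 + n² x) ^ n = 1 + n³ (x + n g(x))` for a polynomial `g` with `g(0) = 0`, and
`x ↦ x + n g(x)` is bijective because `x ↦ y - n g(x)` is an `n`-adic contraction. So the `n`-th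
power maps `1 + n²R` isomorphically onto `1 + n³R`, which has index `|R/n|` in `1 + n²R`, and
comparing indices in `Rˣ` gives `[Rˣ : (Rˣ)ⁿ] = |R/n| · |μ_n(R)|`.

For the ring of integers of a finite extension `K` of `ℚ_p` and `n = p` this is
`p ^ [K : ℚ_p] · |μ_p(K)|`. If `[E : F]` is prime to `p`, the norm is surjective on units modulo
`p`-th powers, since `N(w) = w ^ [E : F]` for `w ∈ O_F^×`; the order of its kernel is therefore the
quotient of the indices for `E` and `F`.
-/

open Polynomial

section AdicComplete

variable {R : Type*} [CommRing R]

theorem existsUnique_isFixedPt_of_adic_contraction {M : Type*} [AddCommGroup M] [Module R M]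
    (I : Ideal R) [IsAdicComplete I M] {f : M → M}
    (hf : ∀ (k : ℕ) (x y : M), x ≡ y [SMOD (I ^ k • ⊤ : Submodule R M)] →
      f x ≡ f y [SMOD (I ^ (k + 1) • ⊤ : Submodule R M)]) :
    ∃! x, Function.IsFixedPt f x := by
  have weaken {j k : ℕ} (hjk : j ≤ k) : (I ^ k • ⊤ : Submodule R M) ≤ I ^ j • ⊤ :=
    Submodule.smul_mono_left (Ideal.pow_le_pow_right hjk)
  have iterate_congr (k : ℕ) : ∀ x y : M, f^[k] x ≡ f^[k] y [SMOD (I ^ k • ⊤ : Submodule R M)] := by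
    induction k with
    | zero => simp
    | succ k ih =>
      intro x y
      simpa only [Function.iterate_succ_apply'] using hf k _ _ (ih x y)
  obtain ⟨L, hL⟩ := IsPrecomplete.prec (I := I) inferInstance (f := fun k ↦ f^[k] 0)
    fun {j k} hjk ↦ by
      obtain ⟨i, rfl⟩ := Nat.exists_eq_add_of_le hjk
      simpa only [Function.iterate_add_apply] using iterate_congr j 0 (f^[i] 0)
  refine ⟨L, (IsHausdorff.eq_iff_smodEq (I := I)).2 fun k ↦ ?_, fun y hy ↦
    (IsHausdorff.eq_iff_smodEq (I := I)).2 fun k ↦ ?_⟩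
  · have h : f^[k + 1] 0 ≡ f L [SMOD (I ^ (k + 1) • ⊤ : Submodule R M)] := by
      simpa only [Function.iterate_succ_apply'] using hf k _ _ (hL k)
    exact (h.symm.trans (hL (k + 1))).mono (weaken k.le_succ)
  · simpa only [hy.iterate k |>.eq] using (iterate_congr k y 0).trans (hL k)

theorem bijective_add_mul_eval (a : R) [IsAdicComplete (Ideal.span {a}) R] (g : R[X]) :
    Function.Bijective fun x ↦ x + a * g.eval x := by
  refine Function.bijective_iff_existsUnique _ |>.2 fun y ↦ ?_
  have := existsUnique_isFixedPt_of_adic_contraction (Ideal.span {a}) (M := R)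
    (f := fun x ↦ y - a * g.eval x) fun k x z hxz ↦ by
      simp only [SModEq.sub_mem, smul_eq_mul, Ideal.mul_top, Ideal.span_singleton_pow,
        Ideal.mem_span_singleton] at hxz ⊢
      have h := mul_dvd_mul_left a (hxz.trans (sub_dvd_eval_sub x z g))
      rw [← dvd_neg, pow_succ']
      exact h.trans (dvd_of_eq (by ring))
  simpa only [Function.IsFixedPt, sub_eq_iff_eq_add, eq_comm (a := y)] using this

theorem isAdicComplete_of_finite (I : Ideal R) [IsNoetherianRing R] [IsAdicComplete I R]
    (M : Type*) [AddCommGroup M] [Module R M] [Module.Finite R M] : IsAdicComplete I M where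
  toIsHausdorff := .of_le_jacobson I M (IsAdicComplete.le_jacobson_bot I)
  toIsPrecomplete := AdicCompletion.of_surjective_iff.1 fun y ↦ by
    obtain ⟨t, rfl⟩ := AdicCompletion.ofTensorProduct_surjective_of_finite I M y
    induction t with
    | zero => exact ⟨0, by simp⟩
    | add s t hs ht =>
      obtain ⟨⟨x, hx⟩, ⟨z, hz⟩⟩ := And.intro hs ht
      exact ⟨x + z, by rw [map_add, map_add, hx, hz]⟩
    | tmul r x =>
      obtain ⟨a, rfl⟩ := AdicCompletion.of_surjective I R r
      exact ⟨a • x, (map_smul _ a x).trans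
        (algebraMap_smul (AdicCompletion I R) a (AdicCompletion.of I M x)).symm⟩

end AdicComplete

section PrincipalUnits

variable {R : Type*} [CommRing R]

/-- The group of units of `R` congruent to `1` modulo `I`, encoded as the kernel of
`Rˣ → (R ⧸ I)ˣ`. For the powers of the maximal ideal of the ring of integers of a local field these
are the higher unit groups. -/
def principalUnits (I : Ideal R) : Subgroup Rˣ :=
  (Units.map (Ideal.Quotient.mk I : R →* R ⧸ I)).ker

theorem mem_principalUnits {I : Ideal R} {u : Rˣ} : u ∈ principalUnits I ↔ (u : R) - 1 ∈ I := by
  rw [principalUnits, MonoidHom.mem_ker, Units.ext_iff, ← Ideal.Quotient.eq]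
  simp

theorem mem_principalUnits_span_singleton {a : R} {u : Rˣ} :
    u ∈ principalUnits (Ideal.span {a}) ↔ ∃ x, (u : R) = 1 + a * x := by
  simp only [mem_principalUnits, Ideal.mem_span_singleton, dvd_def, sub_eq_iff_eq_add']

instance finiteIndex_principalUnits (I : Ideal R) [Finite (R ⧸ I)] :
    (principalUnits I).FiniteIndex :=
  Subgroup.finiteIndex_ker _

theorem isUnit_one_add_of_mem_jacobson_bot {x : R} (hx : x ∈ Ideal.jacobson (⊥ : Ideal R)) :
    IsUnit (1 + x) := by
  simpa [add_comm] using Ideal.mem_jacobson_bot.1 hx 1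

theorem relIndex_principalUnits {I J : Ideal R} (hI : I ≤ Ideal.jacobson ⊥) (hIJ : I ^ 2 ≤ J) :
    (principalUnits J).relIndex (principalUnits I) =
      J.toAddSubgroup.relIndex I.toAddSubgroup := by
  let δ : principalUnits I →* Multiplicative (R ⧸ J) :=
    .mk' (fun u ↦ .ofAdd (Ideal.Quotient.mk J ((u : Rˣ) - 1))) fun u v ↦ by
      rw [← ofAdd_add, ← map_add, Multiplicative.ofAdd.apply_eq_iff_eq, Ideal.Quotient.eq]
      have huv : ((u : Rˣ) - 1 : R) * ((v : Rˣ) - 1) ∈ J :=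
        hIJ (pow_two I ▸ Ideal.mul_mem_mul (mem_principalUnits.1 u.2) (mem_principalUnits.1 v.2))
      convert huv using 1
      push_cast
      ring
  have hker : δ.ker = (principalUnits J).subgroupOf (principalUnits I) := by
    ext u
    rw [Subgroup.mem_subgroupOf, mem_principalUnits, ← Ideal.Quotient.eq_zero_iff_mem]
    rfl
  have hrange : δ.range =
      (I.toAddSubgroup.map (Ideal.Quotient.mk J).toAddMonoidHom).toSubgroup := by
    ext y
    constructor
    · rintro ⟨u, rfl⟩
      exact ⟨_, mem_principalUnits.1 u.2, rfl⟩
    · rintro ⟨x, hx, hxy⟩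
      obtain ⟨u, hu⟩ := isUnit_one_add_of_mem_jacobson_bot (hI hx)
      have hux : (u : R) - 1 = x := by rw [hu, add_sub_cancel_left]
      exact ⟨⟨u, mem_principalUnits.2 (hux ▸ hx)⟩, (congrArg _ hux).trans hxy⟩
  have hJ : (Ideal.Quotient.mk J).toAddMonoidHom.ker = J.toAddSubgroup := by
    ext x
    exact Ideal.Quotient.eq_zero_iff_mem
  rw [Subgroup.relIndex, ← hker, Subgroup.index_ker, hrange, ← hJ, AddSubgroup.relIndex_ker]
  rfl

theorem relIndex_span_pow_succ {a : R} (ha : a ∈ nonZeroDivisors R) (k : ℕ) :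
    (Ideal.span {a ^ (k + 1)}).toAddSubgroup.relIndex (Ideal.span {a ^ k}).toAddSubgroup =
      Nat.card (R ⧸ Ideal.span {a}) := by
  let μ : R →+ R := AddMonoidHom.mulLeft (a ^ k)
  have map_span (b : R) : (Ideal.span {b}).toAddSubgroup.map μ =
      (Ideal.span {a ^ k * b}).toAddSubgroup := by
    ext x
    simp [μ, Ideal.mem_span_singleton', mul_comm, mul_left_comm, mul_assoc]
  have hμ : Function.Injective μ := fun x y h ↦
    (mul_cancel_left_mem_nonZeroDivisors (pow_mem ha k)).1 h
  have htop : (Ideal.span {a ^ k}).toAddSubgroup = (⊤ : AddSubgroup R).map μ := by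
    simpa using (map_span 1).symm
  rw [pow_succ, ← map_span, htop, AddSubgroup.relIndex_map_map_of_injective _ _ hμ,
    AddSubgroup.relIndex_top_right]
  rfl

end PrincipalUnits

section UnitPowers

theorem index_range_of_inf_ker_eq_bot {G : Type*} [Group G] (f : G →* G) (V : Subgroup G)
    [V.Normal] [V.FiniteIndex] (hmap : V.map f ≤ V) (hker : V ⊓ f.ker = ⊥) :
    f.range.index = (V.map f).relIndex V * Nat.card f.ker := by
  have card_ker : Nat.card f.ker = V.relIndex (V ⊔ f.ker) := by
    rw [Subgroup.relIndex_sup_left, ← Subgroup.inf_relIndex_right, hker,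
      Subgroup.relIndex_bot_left]
  have index_ne_zero : (V ⊔ f.ker).index ≠ 0 :=
    (Subgroup.finiteIndex_of_le le_sup_left).index_ne_zero
  refine mul_left_cancel₀ index_ne_zero ?_
  calc (V ⊔ f.ker).index * f.range.index
      = (V.map f).index := (Subgroup.index_map V f).symm
    _ = (V.map f).relIndex V * V.index := (Subgroup.relIndex_mul_index hmap).symm
    _ = (V.map f).relIndex V * (V.relIndex (V ⊔ f.ker) * (V ⊔ f.ker).index) := by
      rw [Subgroup.relIndex_mul_index le_sup_left]
    _ = (V ⊔ f.ker).index * ((V.map f).relIndex V * Nat.card f.ker) := by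
      rw [card_ker]; ring

variable {R : Type*} [CommRing R] (n : ℕ)

theorem exists_one_add_sq_mul_pow_eq :
    ∃ g : R[X], g.eval 0 = 0 ∧
      ∀ x, (1 + (n : R) ^ 2 * x) ^ n = 1 + (n : R) ^ 3 * (x + n * g.eval x) := by
  obtain ⟨q, hq⟩ := powAddExpansion (1 : R[X]) ((n : R[X]) ^ 2 * X) n
  refine ⟨q * X ^ 2, by simp, fun x ↦ ?_⟩
  have h := congrArg (eval x) hq
  simp only [eval_add, eval_mul, eval_pow, eval_natCast, eval_one, eval_X, one_pow, mul_one] at h ⊢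
  rw [h]
  ring

variable [IsAdicComplete (Ideal.span {(n : R)}) R]

theorem map_pow_principalUnits :
    (principalUnits (Ideal.span {(n : R) ^ 2})).map (powMonoidHom n) =
      principalUnits (Ideal.span {(n : R) ^ 3}) := by
  obtain ⟨g, -, hg⟩ := exists_one_add_sq_mul_pow_eq (R := R) n
  ext w
  constructor
  · rintro ⟨u, hu, rfl⟩
    obtain ⟨x, hx⟩ := mem_principalUnits_span_singleton.1 hu
    exact mem_principalUnits_span_singleton.2 ⟨_, by simpa [hx] using hg x⟩
  · intro hw
    obtain ⟨y, hy⟩ := mem_principalUnits_span_singleton.1 hw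
    obtain ⟨x, rfl⟩ := (bijective_add_mul_eval (n : R) g).surjective y
    have hx : (n : R) ^ 2 * x ∈ Ideal.jacobson (⊥ : Ideal R) :=
      IsAdicComplete.le_jacobson_bot _ (Ideal.mem_span_singleton.2 ⟨n * x, by ring⟩)
    obtain ⟨u, hu⟩ := isUnit_one_add_of_mem_jacobson_bot hx
    refine ⟨u, mem_principalUnits_span_singleton.2 ⟨x, hu⟩, Units.ext ?_⟩
    rw [powMonoidHom_apply, Units.val_pow_eq_pow_val, hu, hg, hy]

theorem principalUnits_inf_ker_pow (hn : (n : R) ∈ nonZeroDivisors R) :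
    principalUnits (Ideal.span {(n : R) ^ 2}) ⊓ (powMonoidHom n).ker = ⊥ := by
  obtain ⟨g, hg0, hg⟩ := exists_one_add_sq_mul_pow_eq (R := R) n
  refine (Subgroup.eq_bot_iff_forall _).2 fun u ⟨hu, hun⟩ ↦ Units.ext ?_
  obtain ⟨x, hx⟩ := mem_principalUnits_span_singleton.1 hu
  have pow_eq_one : (1 + (n : R) ^ 2 * x) ^ n = 1 := by
    rw [← hx]; exact congrArg Units.val hun
  have hx0 : x + n * g.eval x = 0 := by
    rw [hg, add_eq_left] at pow_eq_one
    exact (mul_left_mem_nonZeroDivisors_eq_zero_iff (pow_mem hn 3)).1 pow_eq_one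
  have : x = 0 := (bijective_add_mul_eval (n : R) g).injective (by simpa [hg0] using hx0)
  simp [hx, this]

theorem index_range_powMonoidHom_units (hn : (n : R) ∈ nonZeroDivisors R)
    [Finite (R ⧸ Ideal.span {(n : R)})] :
    (powMonoidHom n : Rˣ →* Rˣ).range.index =
      Nat.card (R ⧸ Ideal.span {(n : R)}) * Nat.card (rootsOfUnity n R) := by
  have : Finite (R ⧸ Ideal.span {(n : R) ^ 2}) := by
    rw [← Ideal.span_singleton_pow]
    exact Ideal.finite_quotient_pow (Submodule.fg_span_singleton _) 2
  have map_le : (principalUnits (Ideal.span {(n : R) ^ 2})).map (powMonoidHom n) ≤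
      principalUnits (Ideal.span {(n : R) ^ 2}) := by
    rintro _ ⟨u, hu, rfl⟩
    exact pow_mem hu n
  have span_sq_le : Ideal.span {(n : R) ^ 2} ≤ Ideal.jacobson ⊥ :=
    (Ideal.span_singleton_le_span_singleton.2 (dvd_pow_self _ two_ne_zero)).trans
      (IsAdicComplete.le_jacobson_bot _)
  have sq_le_cube : Ideal.span {(n : R) ^ 2} ^ 2 ≤ Ideal.span {(n : R) ^ 3} := by
    rw [Ideal.span_singleton_pow, Ideal.span_singleton_le_span_singleton, ← pow_mul]
    exact pow_dvd_pow _ (by norm_num)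
  rw [index_range_of_inf_ker_eq_bot _ _ map_le (principalUnits_inf_ker_pow n hn),
    map_pow_principalUnits, relIndex_principalUnits span_sq_le sq_le_cube,
    relIndex_span_pow_succ hn, rootsOfUnity_eq_ker]

end UnitPowers

section FinitePadicIntAlgebra

open IsLocalRing

theorem card_quotient_map_maximalIdeal (R S : Type*) [CommRing R] [IsLocalRing R] [CommRing S]
    [Algebra R S] [Module.Finite R S] [Module.Free R S] :
    Nat.card (S ⧸ (maximalIdeal R).map (algebraMap R S)) =
      Nat.card (ResidueField R) ^ Module.finrank R S := by
  let _ : Field (R ⧸ maximalIdeal R) := Ideal.Quotient.field _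
  have : Module.Finite (R ⧸ maximalIdeal R) (S ⧸ (maximalIdeal R).map (algebraMap R S)) :=
    .of_restrictScalars_finite R _ _
  rw [← finrank_quotient_map]
  exact Module.natCard_eq_pow_finrank (K := R ⧸ maximalIdeal R)

variable (p : ℕ) [Fact p.Prime] (S : Type*) [CommRing S] [Algebra ℤ_[p] S]

theorem map_maximalIdeal_padicInt :
    (maximalIdeal ℤ_[p]).map (algebraMap ℤ_[p] S) = Ideal.span {(p : S)} := by
  rw [PadicInt.maximalIdeal_eq_span_p, Ideal.map_span, Set.image_singleton, map_natCast]

theorem isAdicComplete_span_prime_of_finite_padicInt [Module.Finite ℤ_[p] S] :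
    IsAdicComplete (Ideal.span {(p : S)}) S := by
  rw [← map_maximalIdeal_padicInt, IsAdicComplete.map_algebraMap_iff]
  exact isAdicComplete_of_finite _ S

theorem natCast_mem_nonZeroDivisors_of_isTorsionFree_padicInt [Module.IsTorsionFree ℤ_[p] S] :
    (p : S) ∈ nonZeroDivisors S := by
  refine mem_nonZeroDivisors_iff_left.2 fun x hx ↦ ?_
  rw [← map_natCast (algebraMap ℤ_[p] S), ← Algebra.smul_def] at hx
  exact (smul_eq_zero_iff_right PadicInt.prime_p.ne_zero).1 hx

variable [Module.Finite ℤ_[p] S] [Module.Free ℤ_[p] S]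

theorem card_quotient_span_prime_of_free_padicInt :
    Nat.card (S ⧸ Ideal.span {(p : S)}) = p ^ Module.finrank ℤ_[p] S := by
  rw [← map_maximalIdeal_padicInt, card_quotient_map_maximalIdeal,
    Nat.card_congr PadicInt.residueField.toEquiv, Nat.card_zmod]

theorem index_range_powMonoidHom_units_of_free_padicInt :
    (powMonoidHom p : Sˣ →* Sˣ).range.index =
      p ^ Module.finrank ℤ_[p] S * Nat.card (rootsOfUnity p S) := by
  have := isAdicComplete_span_prime_of_finite_padicInt p S
  have card_quotient := card_quotient_span_prime_of_free_padicInt p S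
  have : Finite (S ⧸ Ideal.span {(p : S)}) := Nat.finite_of_card_ne_zero <| by
    rw [card_quotient]
    exact pow_ne_zero _ (Fact.out : p.Prime).ne_zero
  rw [index_range_powMonoidHom_units p (natCast_mem_nonZeroDivisors_of_isTorsionFree_padicInt p S),
    card_quotient]

end FinitePadicIntAlgebra

section PowQuotient

variable {G H : Type*} [CommGroup G] [CommGroup H]

/-- The homomorphism `G/Gⁿ → H/Hⁿ` induced by a homomorphism `f : G → H`, where `Gⁿ` is encoded as
the range of `powMonoidHom n`. -/
def powQuotientMap (f : G →* H) (n : ℕ) :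
    G ⧸ (powMonoidHom n : G →* G).range →* H ⧸ (powMonoidHom n : H →* H).range :=
  QuotientGroup.map _ _ f <| by
    rintro _ ⟨u, rfl⟩
    exact ⟨f u, by simp⟩

theorem mem_ker_powQuotientMap {f : G →* H} {n : ℕ}
    {ξ : G ⧸ (powMonoidHom n : G →* G).range} :
    ξ ∈ (powQuotientMap f n).ker ↔ ∃ u : G, QuotientGroup.mk u = ξ ∧ ∃ w : H, f u = w ^ n := by
  have mk_mem (u : G) : QuotientGroup.mk u ∈ (powQuotientMap f n).ker ↔ ∃ w : H, f u = w ^ n := by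
    rw [MonoidHom.mem_ker, powQuotientMap, QuotientGroup.map_mk, QuotientGroup.eq_one_iff]
    exact exists_congr fun w ↦ eq_comm
  constructor
  · obtain ⟨u, rfl⟩ := QuotientGroup.mk_surjective ξ
    exact fun h ↦ ⟨u, rfl, (mk_mem u).1 h⟩
  · rintro ⟨u, rfl, h⟩
    exact (mk_mem u).2 h

theorem powQuotientMap_surjective_of_coprime {f : G →* H} {i : H →* G} {m n : ℕ}
    (hfi : ∀ w, f (i w) = w ^ m) (hmn : m.Coprime n) :
    Function.Surjective (powQuotientMap f n) := by
  intro y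
  obtain ⟨w, rfl⟩ := QuotientGroup.mk_surjective y
  have bezout : (m * m.gcdA n + n * m.gcdB n : ℤ) = 1 := by
    rw [← Nat.gcd_eq_gcd_ab, hmn.gcd_eq_one, Nat.cast_one]
  refine ⟨QuotientGroup.mk (i (w ^ m.gcdA n)), ?_⟩
  rw [powQuotientMap, QuotientGroup.map_mk, QuotientGroup.eq, hfi]
  refine ⟨w ^ m.gcdB n, ?_⟩
  rw [powMonoidHom_apply, eq_inv_mul_iff_mul_eq]
  simp only [← zpow_natCast, ← zpow_mul, ← zpow_add]
  rw [mul_comm, mul_comm (m.gcdB n), bezout, zpow_one]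

theorem card_ker_powQuotientMap_mul_index {f : G →* H} {n : ℕ}
    (hf : Function.Surjective (powQuotientMap f n)) :
    Nat.card (powQuotientMap f n).ker * (powMonoidHom n : H →* H).range.index =
      (powMonoidHom n : G →* G).range.index := by
  have h := Subgroup.card_mul_index (powQuotientMap f n).ker
  rwa [Subgroup.index_ker, MonoidHom.range_eq_top.2 hf, Subgroup.card_top] at h

end PowQuotient

section IntegralClosure

variable (R K L : Type*) [CommRing R] [Field K] [Field L] [Algebra R K] [Algebra R L] [Algebra K L]
  [IsScalarTower R K L]

/-- The norm `N_{L/K}` restricted to the integral closures of `R`. For `R = ℤ_[p]` and finite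
extensions of `ℚ_[p]` it is the norm between the rings of integers. -/
noncomputable def integralClosureNorm : integralClosure R L →* integralClosure R K :=
  ((Algebra.norm K).comp (integralClosure R L).val.toMonoidHom).codRestrict (integralClosure R K)
    fun x ↦ Algebra.isIntegral_norm K x.2

theorem integralClosureNorm_mapIntegralClosure (x : integralClosure R K) :
    integralClosureNorm R K L ((IsScalarTower.toAlgHom R K L).mapIntegralClosure x) =
      x ^ Module.finrank K L :=
  Subtype.ext (Algebra.norm_algebraMap (S := L) (x : K))

theorem powQuotientMap_integralClosureNorm_surjective {n : ℕ}
    (hn : (Module.finrank K L).Coprime n) :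
    Function.Surjective (powQuotientMap (Units.map (integralClosureNorm R K L)) n) :=
  powQuotientMap_surjective_of_coprime
    (i := Units.map (IsScalarTower.toAlgHom R K L).mapIntegralClosure.toMonoidHom)
    (m := Module.finrank K L)
    (fun w ↦ Units.ext (integralClosureNorm_mapIntegralClosure R K L (w : integralClosure R K))) hn

theorem card_rootsOfUnity_integralClosure {n : ℕ} [NeZero n] {ζ : K} (hζ : IsPrimitiveRoot ζ n) :
    Nat.card (rootsOfUnity n (integralClosure R K)) = n := by
  have hint : IsIntegral R ζ := (hζ.isIntegral (NeZero.pos n)).tower_top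
  exact (IsPrimitiveRoot.of_map_of_injective (f := (integralClosure R K).val)
    (ζ := ⟨ζ, hint⟩) hζ Subtype.val_injective).card_rootsOfUnity

end IntegralClosure

section PadicField

variable (p : ℕ) [Fact p.Prime]

theorem index_range_powMonoidHom_units_integralClosure_padicInt (K : Type*) [Field K]
    [Algebra ℚ_[p] K] [FiniteDimensional ℚ_[p] K] [Algebra ℤ_[p] K] [IsScalarTower ℤ_[p] ℚ_[p] K] :
    (powMonoidHom p : (integralClosure ℤ_[p] K)ˣ →* (integralClosure ℤ_[p] K)ˣ).range.index =
      p ^ Module.finrank ℚ_[p] K * Nat.card (rootsOfUnity p (integralClosure ℤ_[p] K)) := by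
  have : Module.IsTorsionFree ℤ_[p] K := .trans_faithfulSMul ℤ_[p] ℚ_[p] K
  have : Module.Finite ℤ_[p] (integralClosure ℤ_[p] K) :=
    IsIntegralClosure.finite ℤ_[p] ℚ_[p] K _
  have : Module.Free ℤ_[p] (integralClosure ℤ_[p] K) :=
    IsIntegralClosure.module_free ℤ_[p] ℚ_[p] K _
  rw [index_range_powMonoidHom_units_of_free_padicInt, IsIntegralClosure.rank ℤ_[p] ℚ_[p] K]

variable (F E : Type*) [Field F] [Field E] [Algebra ℚ_[p] F] [FiniteDimensional ℚ_[p] F]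
  [Algebra ℤ_[p] F] [IsScalarTower ℤ_[p] ℚ_[p] F] [Algebra F E] [Algebra ℚ_[p] E]
  [IsScalarTower ℚ_[p] F E] [Algebra ℤ_[p] E] [IsScalarTower ℤ_[p] ℚ_[p] E]
  [IsScalarTower ℤ_[p] F E]

theorem card_ker_powQuotientMap_integralClosureNorm (hcop : (Module.finrank F E).Coprime p) :
    Nat.card (powQuotientMap (Units.map (integralClosureNorm ℤ_[p] F E)) p).ker *
        Nat.card (rootsOfUnity p (integralClosure ℤ_[p] F)) =
      p ^ (Module.finrank ℚ_[p] F * (Module.finrank F E - 1)) *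
        Nat.card (rootsOfUnity p (integralClosure ℤ_[p] E)) := by
  have hp : p.Prime := Fact.out
  have finrank_pos : 0 < Module.finrank F E := Nat.pos_of_ne_zero fun h ↦
    hp.ne_one (by simpa [h] using hcop)
  have : FiniteDimensional F E := Module.finite_of_finrank_pos finrank_pos
  have : FiniteDimensional ℚ_[p] E := Module.Finite.trans F E
  have hcard := card_ker_powQuotientMap_mul_index
    (powQuotientMap_integralClosureNorm_surjective ℤ_[p] F E hcop)
  have hrank : Module.finrank ℚ_[p] E =
      Module.finrank ℚ_[p] F + Module.finrank ℚ_[p] F * (Module.finrank F E - 1) := by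
    rw [← Module.finrank_mul_finrank ℚ_[p] F E, ← mul_one_add,
      Nat.add_sub_cancel' (show 1 ≤ Module.finrank F E from finrank_pos)]
  rw [index_range_powMonoidHom_units_integralClosure_padicInt,
    index_range_powMonoidHom_units_integralClosure_padicInt, hrank, pow_add] at hcard
  refine mul_left_cancel₀ (pow_ne_zero (Module.finrank ℚ_[p] F) hp.ne_zero) ?_
  linear_combination hcard

end PadicField

theorem stmt_1_general (p : ℕ) [Fact p.Prime] (F E : Type*) [Field F] [Field E]
    [Algebra ℚ_[p] F] [FiniteDimensional ℚ_[p] F]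
    [Algebra ℤ_[p] F] [IsScalarTower ℤ_[p] ℚ_[p] F]
    (ζ : F) (hζ : IsPrimitiveRoot ζ p)
    [Algebra F E] (hcop : (Module.finrank F E).Coprime p)
    [Algebra ℚ_[p] E] [IsScalarTower ℚ_[p] F E]
    [Algebra ℤ_[p] E] [IsScalarTower ℤ_[p] ℚ_[p] E] :
    Nat.card {ξ : (integralClosure ℤ_[p] E)ˣ ⧸
        (powMonoidHom p : (integralClosure ℤ_[p] E)ˣ →* (integralClosure ℤ_[p] E)ˣ).range //
        ∃ u : (integralClosure ℤ_[p] E)ˣ, QuotientGroup.mk u = ξ ∧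
          ∃ w : (integralClosure ℤ_[p] F)ˣ,
            Algebra.norm F ((↑(u : (integralClosure ℤ_[p] E)) : E))
              = ((↑(w : (integralClosure ℤ_[p] F)) : F)) ^ p}
      = p ^ (Module.finrank ℚ_[p] F * (Module.finrank F E - 1)) := by
  have hp : p.Prime := Fact.out
  have : IsScalarTower ℤ_[p] F E := .to₁₃₄ ℤ_[p] ℚ_[p] F E
  have hcard := card_ker_powQuotientMap_integralClosureNorm p F E hcop
  have : NeZero p := ⟨hp.ne_zero⟩
  rw [card_rootsOfUnity_integralClosure ℤ_[p] F hζ, card_rootsOfUnity_integralClosure ℤ_[p] E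
    (hζ.map_of_injective (algebraMap F E).injective)] at hcard
  rw [← Nat.eq_of_mul_eq_mul_right hp.pos hcard]
  refine Nat.card_congr (Equiv.subtypeEquivRight fun ξ ↦ ?_)
  simp only [mem_ker_powQuotientMap, Units.ext_iff, Subtype.ext_iff]
  rfl

/-- Let `F` be a finite extension of `ℚ₃` containing a primitive cube root of
unity, `d = [F : ℚ₃]`, and `E` a quadratic field extension of `F`.  Then the kernel of the
map `O_E^×/(O_E^×)³ → O_F^×/(O_F^×)³` induced by the norm `N_{E/F}` has order exactly `3^d`.
The kernel is realised as the set of classes in `O_E^×/(O_E^×)³` admitting a representative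
unit whose norm is the cube of a unit of `O_F`. -/
theorem stmt_1 (F E : Type) [Field F] [Field E]
    [Algebra ℚ_[3] F] [FiniteDimensional ℚ_[3] F]
    [Algebra ℤ_[3] F] [IsScalarTower ℤ_[3] ℚ_[3] F]
    (ζ : F) (hζ : IsPrimitiveRoot ζ 3)
    [Algebra F E] (hquad : Module.finrank F E = 2)
    [Algebra ℚ_[3] E] [IsScalarTower ℚ_[3] F E]
    [Algebra ℤ_[3] E] [IsScalarTower ℤ_[3] ℚ_[3] E] :
    Nat.card {ξ : (integralClosure ℤ_[3] E)ˣ ⧸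
        (powMonoidHom 3 : (integralClosure ℤ_[3] E)ˣ →* (integralClosure ℤ_[3] E)ˣ).range //
        ∃ u : (integralClosure ℤ_[3] E)ˣ, QuotientGroup.mk u = ξ ∧
          ∃ w : (integralClosure ℤ_[3] F)ˣ,
            Algebra.norm F ((↑(u : (integralClosure ℤ_[3] E)) : E))
              = ((↑(w : (integralClosure ℤ_[3] F)) : F)) ^ 3}
      = 3 ^ Module.finrank ℚ_[3] F := by
  simpa [hquad] using stmt_1_general 3 F E ζ hζ (by norm_num [hquad])
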